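/- The algebra 𝒜 is isomorphic as a ℚ-algebra to the ring ℚ[X, X^{−1}] of Laurent polynomials over ℚ; an isomorphism can be chosen sending X to 1 − Y. -/

import Mathlib

/-- `Y = Σ_{n≥1} (n^{n-1}/n!) qⁿ` as a formal power series over `ℚ`. -/
noncomputable def Yq : PowerSeries ℚ :=
  PowerSeries.mk fun n => if n = 0 then 0 else (n : ℚ) ^ (n - 1) / n.factorial

/-- `Z = Σ_{n≥1} (nⁿ/n!) qⁿ` as a formal power series over `ℚ`. -/
noncomputable def Zq : PowerSeries ℚ :=
  PowerSeries.mk fun n => if n = 0 then 0 else (n : ℚ) ^ n / n.factorial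

/-!
Abel's identity `∑_{k ≥ 1} C(n, k) kᵏ⁻¹ (y - k)ⁿ⁻ᵏ = n yⁿ⁻¹` at `y = n` is, coefficient by
coefficient, the relation `Y (1 + Z) = Z`, that is, `(1 - Y) (1 + Z) = 1`. So `𝒜` is generated by
the unit `1 - Y` and its inverse. A nonconstant power series is transcendental over its coefficient
ring, hence the powers of this unit are linearly independent and `X ↦ 1 - Y` identifies
`ℚ[X, X⁻¹]` with `𝒜`.
-/

section Abel

open Finset

theorem choose_mul_choose_sub_comm (n i j : ℕ) :
    n.choose i * (n - i).choose j = n.choose j * (n - j).choose i := by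
  have hi := Nat.choose_mul (n := n) (Nat.le_add_right i j)
  have hj := Nat.choose_mul (n := n) (Nat.le_add_left j i)
  rw [Nat.add_sub_cancel_left] at hi
  rw [Nat.add_sub_cancel] at hj
  rw [← hi, ← hj, Nat.choose_symm_add]

variable {R : Type*} [CommRing R]

theorem sum_neg_one_pow_mul_choose_mul_pow_eq_zero {j n : ℕ} (h : j < n) :
    ∑ k ∈ range (n + 1), (-1) ^ (n - k) * (n.choose k : R) * (k : R) ^ j = 0 := by
  have hdiff := congrFun (fwdDiff_iter_pow_eq_zero_of_lt (R := R) h) 0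
  simpa [fwdDiff_iter_eq_sum_shift] using hdiff

theorem sum_choose_mul_pow_mul_neg_pow (m : ℕ) :
    ∑ k ∈ range (m + 1), ((m + 1).choose (k + 1) : R) * (k + 1) ^ k * (-(k + 1)) ^ (m - k) =
      0 ^ m := by
  rcases Nat.eq_zero_or_pos m with rfl | hm
  · simp
  have hdiff := sum_neg_one_pow_mul_choose_mul_pow_eq_zero (R := R) m.lt_succ_self
  rw [sum_range_succ', Nat.cast_zero, zero_pow hm.ne', mul_zero, add_zero] at hdiff
  rw [zero_pow hm.ne', ← hdiff]
  refine sum_congr rfl fun k hk ↦ ?_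
  have hpow : (k + 1 : R) ^ m = (k + 1) ^ k * (k + 1) ^ (m - k) := by
    rw [← pow_add, Nat.add_sub_cancel' (mem_range_succ_iff.1 hk)]
  rw [Nat.succ_eq_add_one, Nat.add_sub_add_right, Nat.cast_succ, hpow, neg_pow]
  ring

/-- For `n = m + 1`, the coefficient of `x` in Abel's binomial theorem
`∑ₖ C(n, k) x (x + k)ᵏ⁻¹ (y - k)ⁿ⁻ᵏ = (x + y)ⁿ`. -/
theorem sum_choose_mul_pow_mul_sub_pow (m : ℕ) (y : R) :
    ∑ k ∈ range (m + 1), ((m + 1).choose (k + 1) : R) * (k + 1) ^ k * (y - (k + 1)) ^ (m - k) =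
      (m + 1) * y ^ m := by
  calc
    _ = ∑ k ∈ range (m + 1), ∑ j ∈ range (m - k + 1), ((m + 1).choose (k + 1) : R) *
          (k + 1) ^ k * (y ^ j * (-(k + 1)) ^ (m - k - j) * (m - k).choose j) := by
      simp only [sub_eq_add_neg y, add_pow, mul_sum]
    _ = ∑ j ∈ range (m + 1), ∑ k ∈ range (m - j + 1), ((m + 1).choose (k + 1) : R) *
          (k + 1) ^ k * (y ^ j * (-(k + 1)) ^ (m - k - j) * (m - k).choose j) :=
      sum_comm' fun k j ↦ by simp only [mem_range]; omega
    _ = ∑ j ∈ range (m + 1), ((m + 1).choose j : R) * y ^ j * 0 ^ (m - j) := by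
      refine sum_congr rfl fun j hj ↦ ?_
      rw [← sum_choose_mul_pow_mul_neg_pow, mul_sum]
      refine sum_congr rfl fun k _ ↦ ?_
      have hchoose := choose_mul_choose_sub_comm (m + 1) (k + 1) j
      rw [Nat.add_sub_add_right, Nat.sub_add_comm (mem_range_succ_iff.1 hj)] at hchoose
      have hchooseR := congrArg (Nat.cast : ℕ → R) hchoose
      push_cast at hchooseR
      rw [Nat.sub_right_comm]
      linear_combination (k + 1 : R) ^ k * y ^ j * (-(k + 1)) ^ (m - j - k) * hchooseR
    _ = (m + 1) * y ^ m := by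
      have hlt : ∀ j ∈ range m, ((m + 1).choose j : R) * y ^ j * 0 ^ (m - j) = 0 := fun j hj ↦ by
        rw [zero_pow (Nat.sub_ne_zero_of_lt (mem_range.1 hj)), mul_zero]
      rw [sum_range_succ, sum_eq_zero hlt, Nat.choose_succ_self_right]
      simp

end Abel

section PowerSeries

open scoped PowerSeries Polynomial
open PowerSeries (constantCoeff)

theorem mk_div_factorial_mul_mk_div_factorial {K : Type*} [Field K] [CharZero K] (a b : ℕ → K) :
    (PowerSeries.mk fun n ↦ a n / n.factorial) * (PowerSeries.mk fun n ↦ b n / n.factorial) =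
      PowerSeries.mk fun n ↦
        (∑ k ∈ Finset.range (n + 1), n.choose k * a k * b (n - k)) / n.factorial := by
  ext n
  rw [PowerSeries.coeff_mul, Finset.Nat.sum_antidiagonal_eq_sum_range_succ_mk,
    PowerSeries.coeff_mk, Finset.sum_div]
  refine Finset.sum_congr rfl fun k hk ↦ ?_
  have hn : (n.factorial : K) ≠ 0 := Nat.cast_ne_zero.2 n.factorial_ne_zero
  rw [PowerSeries.coeff_mk, PowerSeries.coeff_mk,
    Nat.cast_choose K (Finset.mem_range_succ_iff.1 hk)]
  field_simp

theorem transcendental_of_ne_C_constantCoeff {R : Type*} [CommRing R] [IsDomain R] {f : R⟦X⟧}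
    (hf : f ≠ PowerSeries.C (constantCoeff f)) : Transcendental R f := by
  intro halg
  set g := f - PowerSeries.C (constantCoeff f) with hg
  have hg_const : constantCoeff g = 0 := by simp [hg]
  have hg_alg : IsAlgebraic R g := halg.sub (isAlgebraic_algebraMap (constantCoeff f))
  obtain ⟨p, hp_coeff, hp_root⟩ := hg_alg.exists_nonzero_coeff_and_aeval_eq_zero
    (mem_nonZeroDivisors_of_ne_zero (sub_ne_zero.2 hf))
  have hp_const : constantCoeff (Polynomial.aeval g p) = p.coeff 0 := by
    rw [Polynomial.aeval_def, Polynomial.hom_eval₂, hg_const, Polynomial.eval₂_at_zero]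
    simp
  rw [hp_root, map_zero] at hp_const
  exact hp_coeff hp_const.symm

end PowerSeries

section Laurent

open LaurentPolynomial
open Polynomial (aeval toLaurent toLaurentAlg)
open scoped Polynomial

variable {R A : Type*}

theorem adjoin_T_one_T_neg_one [CommSemiring R] :
    Algebra.adjoin R {T 1, T (-1)} = (⊤ : Subalgebra R R[T;T⁻¹]) := by
  set S : Subalgebra R R[T;T⁻¹] := Algebra.adjoin R {T 1, T (-1)}
  have hpos : T 1 ∈ S := Algebra.subset_adjoin (by simp)
  have hneg : T (-1) ∈ S := Algebra.subset_adjoin (by simp)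
  have hT (n : ℤ) : T n ∈ S := by
    obtain ⟨k, rfl | rfl⟩ := n.eq_nat_or_neg
    · simpa [T_pow] using pow_mem hpos k
    · simpa [T_pow] using pow_mem hneg k
  refine eq_top_iff.2 fun f _ ↦ ?_
  induction f using LaurentPolynomial.induction_on' with
  | add p q hp hq => exact add_mem (hp trivial) (hq trivial)
  | C_mul_T n a =>
    rw [← LaurentPolynomial.smul_eq_C_mul]
    exact S.smul_mem (hT n) a

section Aeval

variable [CommSemiring R] [Semiring A] [Algebra R A]

/-- Evaluation of Laurent polynomials over `R` at a unit of an `R`-algebra, as an `R`-algebra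
homomorphism: the counterpart of `Polynomial.aeval`. -/
noncomputable def laurentAeval (u : Aˣ) : R[T;T⁻¹] →ₐ[R] A :=
  AddMonoidAlgebra.lift R A ℤ ((Units.coeHom A).comp (zpowersHom Aˣ u))

theorem laurentAeval_T (u : Aˣ) (n : ℤ) : laurentAeval (R := R) u (T n) = ↑(u ^ n) := by
  simp [laurentAeval, T, -single_eq_C_mul_T]

theorem range_laurentAeval (u : Aˣ) :
    (laurentAeval (R := R) u).range = Algebra.adjoin R {↑u, ↑u⁻¹} := by
  rw [← Algebra.map_top, ← adjoin_T_one_T_neg_one, AlgHom.map_adjoin, Set.image_pair,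
    laurentAeval_T, laurentAeval_T, zpow_one, zpow_neg_one]

theorem laurentAeval_toLaurent (u : Aˣ) (p : R[X]) :
    laurentAeval u (toLaurent p) = aeval (u : A) p := by
  have hcomp : (laurentAeval u).comp toLaurentAlg = aeval (R := R) (u : A) := by
    ext
    simp [laurentAeval_T]
  exact DFunLike.congr_fun hcomp p

end Aeval

variable [CommRing R] [Ring A] [Algebra R A]

theorem laurentAeval_injective {u : Aˣ} (hu : Transcendental R (u : A)) :
    Function.Injective (laurentAeval (R := R) u) := by
  rw [injective_iff_map_eq_zero]
  intro f hf
  obtain ⟨n, p, hp⟩ := f.exists_T_pow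
  have hp_root : aeval (u : A) p = 0 := by
    rw [← laurentAeval_toLaurent, hp, map_mul, hf, zero_mul]
  rw [transcendental_iff.1 hu p hp_root, map_zero] at hp
  exact (isUnit_T n).mul_left_eq_zero.1 hp.symm

/-- The isomorphism from Laurent polynomials onto the subalgebra generated by a transcendental unit
and its inverse, sending `T 1` to the unit. -/
noncomputable def laurentEquivAdjoin (u : Aˣ) (hu : Transcendental R (u : A)) :
    R[T;T⁻¹] ≃ₐ[R] Algebra.adjoin R {(u : A), ↑u⁻¹} :=
  (AlgEquiv.ofInjective _ (laurentAeval_injective hu)).trans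
    (Subalgebra.equivOfEq _ _ (range_laurentAeval u))

theorem laurentEquivAdjoin_T_one (u : Aˣ) (hu : Transcendental R (u : A)) :
    (laurentEquivAdjoin u hu (T 1) : A) = u :=
  (laurentAeval_T u 1).trans (by rw [zpow_one])

end Laurent

theorem adjoin_one_sub_one_add {R A : Type*} [CommRing R] [Ring A] [Algebra R A] (a b : A) :
    Algebra.adjoin R {1 - a, 1 + b} = Algebra.adjoin R {a, b} := by
  apply le_antisymm <;> rw [Algebra.adjoin_le_iff, Set.pair_subset_iff]
  · have ha : a ∈ Algebra.adjoin R {a, b} := Algebra.subset_adjoin (by simp)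
    have hb : b ∈ Algebra.adjoin R {a, b} := Algebra.subset_adjoin (by simp)
    exact ⟨sub_mem (one_mem _) ha, add_mem (one_mem _) hb⟩
  · have ha : 1 - a ∈ Algebra.adjoin R {1 - a, 1 + b} := Algebra.subset_adjoin (by simp)
    have hb : 1 + b ∈ Algebra.adjoin R {1 - a, 1 + b} := Algebra.subset_adjoin (by simp)
    exact ⟨by simpa using sub_mem (one_mem _) ha, by simpa using sub_mem hb (one_mem _)⟩

theorem Yq_eq_mk_div_factorial :
    Yq = PowerSeries.mk fun n ↦ (if n = 0 then 0 else (n : ℚ) ^ (n - 1)) / n.factorial := by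
  ext n
  rcases n with _ | n <;> simp [Yq]

theorem one_add_Zq_eq_mk_div_factorial :
    1 + Zq = PowerSeries.mk fun n ↦ (n : ℚ) ^ n / n.factorial := by
  ext n
  rcases n with _ | n <;> simp [Zq, PowerSeries.coeff_one]

theorem Yq_mul_one_add_Zq : Yq * (1 + Zq) = Zq := by
  rw [Yq_eq_mk_div_factorial, one_add_Zq_eq_mk_div_factorial,
    mk_div_factorial_mul_mk_div_factorial]
  ext n
  rcases n with _ | m
  · simp [Zq]
  have habel := sum_choose_mul_pow_mul_sub_pow m (m + 1 : ℚ)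
  rw [← pow_succ'] at habel
  rw [PowerSeries.coeff_mk, Finset.sum_range_succ', Zq, PowerSeries.coeff_mk,
    if_neg m.succ_ne_zero, Nat.cast_succ, ← habel, if_pos rfl, mul_zero, zero_mul, add_zero]
  congr 1
  refine Finset.sum_congr rfl fun k hk ↦ ?_
  rw [if_neg k.succ_ne_zero, Nat.add_sub_cancel, Nat.add_sub_add_right, Nat.cast_succ,
    add_sub_add_right_eq_sub, Nat.cast_sub (Finset.mem_range_succ_iff.1 hk)]

theorem one_sub_Yq_mul_one_add_Zq : (1 - Yq) * (1 + Zq) = 1 := by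
  linear_combination -Yq_mul_one_add_Zq

theorem transcendental_one_sub_Yq : Transcendental ℚ (1 - Yq) := by
  refine transcendental_of_ne_C_constantCoeff fun hconst ↦ ?_
  have hcoeff := congrArg (PowerSeries.coeff 1) hconst
  simp [Yq, PowerSeries.coeff_one] at hcoeff

/-- The algebra `𝒜 = ℚ[Y,Z]` is isomorphic, as a `ℚ`-algebra, to the Laurent polynomial
ring `ℚ[X, X⁻¹]`, via an isomorphism sending `X` to `1 - Y`. -/
theorem adjoin_YZ_iso_laurent :
    ∃ e : LaurentPolynomial ℚ ≃ₐ[ℚ] Algebra.adjoin ℚ {Yq, Zq},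
      (e (LaurentPolynomial.T 1) : PowerSeries ℚ) = 1 - Yq := by
  let u : (PowerSeries ℚ)ˣ := .mkOfMulEqOne (1 - Yq) (1 + Zq) one_sub_Yq_mul_one_add_Zq
  have hadjoin : Algebra.adjoin ℚ {(u : PowerSeries ℚ), ↑u⁻¹} = Algebra.adjoin ℚ {Yq, Zq} :=
    adjoin_one_sub_one_add Yq Zq
  exact ⟨(laurentEquivAdjoin u transcendental_one_sub_Yq).trans (Subalgebra.equivOfEq _ _ hadjoin),
    laurentEquivAdjoin_T_one u transcendental_one_sub_Yq⟩
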